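/- Under the moment conditions, Γ(ν(w_min)) ≤ min( Γ(ν(1)), Γ(ν(σ⁻²)) ), where w_min(σ) := (σ² + Γ(A) Γ(B)⁻¹)⁻¹, ν(1) is the asymptotic variance of ordinary least squares (weight w ≡ 1) and ν(σ⁻²) that of standard weighted least squares (weight w(σ) = σ⁻²). Moreover the inequality is strict if E[g(x)² x xᵀ] is positive definite and the distribution of σ is not a point mass. -/

import Mathlib

open MeasureTheory ProbabilityTheory Matrix

noncomputable section

/-- `E[x xᵀ]`, the second moment matrix of the random vector `x`. -/
def secondMoment {Ω : Type*} [MeasurableSpace Ω] {p : ℕ} (μ : Measure Ω)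
    (x : Ω → Fin p → ℝ) : Matrix (Fin p) (Fin p) ℝ :=
  Matrix.of fun j k => ∫ ω, x ω j * x ω k ∂μ

/-- `β = E[x xᵀ]⁻¹ E[x f(x)]`, the slope of the best linear approximation to `f`. -/
def bestLinear {Ω : Type*} [MeasurableSpace Ω] {p : ℕ} (μ : Measure Ω)
    (x : Ω → Fin p → ℝ) (f : (Fin p → ℝ) → ℝ) : Fin p → ℝ :=
  (secondMoment μ x)⁻¹ *ᵥ fun j => ∫ ω, x ω j * f (x ω) ∂μ

/-- `g(v) = f(v) − vᵀ β`, the nonlinear component of `f`. -/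
def nonlinPart {Ω : Type*} [MeasurableSpace Ω] {p : ℕ} (μ : Measure Ω)
    (x : Ω → Fin p → ℝ) (f : (Fin p → ℝ) → ℝ) (v : Fin p → ℝ) : ℝ :=
  f v - v ⬝ᵥ bestLinear μ x f

/-- `E[g(x)² x xᵀ]`. -/
def misspecMoment {Ω : Type*} [MeasurableSpace Ω] {p : ℕ} (μ : Measure Ω)
    (x : Ω → Fin p → ℝ) (f : (Fin p → ℝ) → ℝ) : Matrix (Fin p) (Fin p) ℝ :=
  Matrix.of fun j k => ∫ ω, (nonlinPart μ x f (x ω)) ^ 2 * (x ω j * x ω k) ∂μ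

/-- `A = Bᵀ E[g(x)² x xᵀ] B` with `B = E[x xᵀ]⁻¹`. -/
def matA {Ω : Type*} [MeasurableSpace Ω] {p : ℕ} (μ : Measure Ω)
    (x : Ω → Fin p → ℝ) (f : (Fin p → ℝ) → ℝ) : Matrix (Fin p) (Fin p) ℝ :=
  ((secondMoment μ x)⁻¹)ᵀ * misspecMoment μ x f * (secondMoment μ x)⁻¹

/-- The asymptotic covariance `ν(w)` of the weighted least squares estimator. -/
def asympVar {Ω : Type*} [MeasurableSpace Ω] {p : ℕ} (μ : Measure Ω)
    (x : Ω → Fin p → ℝ) (σ : Ω → ℝ) (f : (Fin p → ℝ) → ℝ) (w : ℝ → ℝ) :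
    Matrix (Fin p) (Fin p) ℝ :=
  ((∫ ω, w (σ ω) ∂μ) ^ 2)⁻¹ •
    ((∫ ω, (w (σ ω)) ^ 2 ∂μ) •
        ((secondMoment μ x)⁻¹ * misspecMoment μ x f * (secondMoment μ x)⁻¹)
      + (∫ ω, (σ ω) ^ 2 * (w (σ ω)) ^ 2 ∂μ) • (secondMoment μ x)⁻¹)

/-!
Put `b = Γ(B)` and `c = Γ(A) / b`. Applying `Γ` to `ν(w)` turns the misspecification term into
extra noise of constant variance `c`: with `h = σ² + c` and `u = w(σ)`,
`Γ(ν(w)) = b * E[h u²] / E[u]²`. By the Cauchy–Schwarz inequality `E[u]² ≤ E[h⁻¹] E[h u²]`, so the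
minimum `b / E[h⁻¹]` is attained at `u = h⁻¹`, that is at `w = w_min`. Equality forces `h u` to be
almost surely constant; for `u = 1`, and for `u = σ⁻²` when `c > 0`, this makes `σ` constant.
-/

section CauchySchwarz

variable {α : Type*} [MeasurableSpace α] {μ : Measure α} {f h u : α → ℝ}

theorem integral_pos_of_nonneg_of_not_ae_eq_zero (hf : 0 ≤ᵐ[μ] f) (hfi : Integrable f μ)
    (hne : ¬ f =ᵐ[μ] 0) : 0 < ∫ ω, f ω ∂μ :=
  (integral_nonneg_of_ae hf).lt_of_ne' (mt (integral_eq_zero_iff_of_nonneg_ae hf hfi).1 hne)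

theorem integral_pos_of_ae_pos [(ae μ).NeBot] (hf : ∀ᵐ ω ∂μ, 0 < f ω) (hfi : Integrable f μ) :
    0 < ∫ ω, f ω ∂μ := by
  refine integral_pos_of_nonneg_of_not_ae_eq_zero (hf.mono fun ω => le_of_lt) hfi fun hzero => ?_
  obtain ⟨ω, hω, hω'⟩ := (hf.and hzero).exists
  exact hω.ne' hω'

theorem inv_mul_sub_sq_ae_eq (hne : ∀ᵐ ω ∂μ, h ω ≠ 0) (t : ℝ) :
    (fun ω => (h ω)⁻¹ * (t - h ω * u ω) ^ 2) =ᵐ[μ]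
      fun ω => (h ω)⁻¹ * (t * t) + -2 * t * u ω + h ω * u ω ^ 2 := by
  filter_upwards [hne] with ω hω
  field_simp
  ring

theorem integrable_inv_mul_sub_sq (hne : ∀ᵐ ω ∂μ, h ω ≠ 0)
    (hinv : Integrable (fun ω => (h ω)⁻¹) μ) (hu : Integrable u μ)
    (hhu : Integrable (fun ω => h ω * u ω ^ 2) μ) (t : ℝ) :
    Integrable (fun ω => (h ω)⁻¹ * (t - h ω * u ω) ^ 2) μ :=
  (((hinv.mul_const (t * t)).add (hu.const_mul (-2 * t))).add hhu).congr
    (inv_mul_sub_sq_ae_eq hne t).symm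

theorem integral_inv_mul_sub_sq (hne : ∀ᵐ ω ∂μ, h ω ≠ 0)
    (hinv : Integrable (fun ω => (h ω)⁻¹) μ) (hu : Integrable u μ)
    (hhu : Integrable (fun ω => h ω * u ω ^ 2) μ) (t : ℝ) :
    ∫ ω, (h ω)⁻¹ * (t - h ω * u ω) ^ 2 ∂μ =
      (∫ ω, (h ω)⁻¹ ∂μ) * (t * t) + -2 * (∫ ω, u ω ∂μ) * t + ∫ ω, h ω * u ω ^ 2 ∂μ := by
  have hinv' := hinv.mul_const (t * t)
  have hu' := hu.const_mul (-2 * t)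
  have hsum : Integrable (fun ω => (h ω)⁻¹ * (t * t) + -2 * t * u ω) μ := hinv'.add hu'
  rw [integral_congr_ae (inv_mul_sub_sq_ae_eq hne t), integral_add hsum hhu,
    integral_add hinv' hu', integral_mul_const, integral_const_mul]
  ring

theorem sq_integral_le_integral_inv_mul_integral_mul_sq (hpos : ∀ᵐ ω ∂μ, 0 < h ω)
    (hinv : Integrable (fun ω => (h ω)⁻¹) μ) (hu : Integrable u μ)
    (hhu : Integrable (fun ω => h ω * u ω ^ 2) μ) :
    (∫ ω, u ω ∂μ) ^ 2 ≤ (∫ ω, (h ω)⁻¹ ∂μ) * ∫ ω, h ω * u ω ^ 2 ∂μ := by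
  have hdiscrim := discrim_le_zero fun t => by
    rw [← integral_inv_mul_sub_sq (hpos.mono fun ω => ne_of_gt) hinv hu hhu t]
    refine integral_nonneg_of_ae (hpos.mono fun ω hω => ?_)
    exact mul_nonneg (inv_pos.2 hω).le (sq_nonneg _)
  rw [discrim] at hdiscrim
  linarith

theorem sq_integral_lt_integral_inv_mul_integral_mul_sq (hpos : ∀ᵐ ω ∂μ, 0 < h ω)
    (hinv : Integrable (fun ω => (h ω)⁻¹) μ) (hu : Integrable u μ)
    (hhu : Integrable (fun ω => h ω * u ω ^ 2) μ)
    (hconst : ¬ ∃ t : ℝ, ∀ᵐ ω ∂μ, h ω * u ω = t) :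
    (∫ ω, u ω ∂μ) ^ 2 < (∫ ω, (h ω)⁻¹ ∂μ) * ∫ ω, h ω * u ω ^ 2 ∂μ := by
  have : (ae μ).NeBot := ⟨fun hbot => hconst ⟨0, by simp [hbot]⟩⟩
  have hne : ∀ᵐ ω ∂μ, h ω ≠ 0 := hpos.mono fun ω => ne_of_gt
  have hinv_pos := integral_pos_of_ae_pos (hpos.mono fun ω => inv_pos.2) hinv
  have hdiscrim := discrim_lt_zero hinv_pos.ne' fun t => by
    rw [← integral_inv_mul_sub_sq hne hinv hu hhu t]
    refine integral_pos_of_nonneg_of_not_ae_eq_zero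
      (hpos.mono fun ω hω => mul_nonneg (inv_pos.2 hω).le (sq_nonneg _))
      (integrable_inv_mul_sub_sq hne hinv hu hhu t) fun hzero => hconst ⟨t, ?_⟩
    filter_upwards [hzero, hne] with ω hω hω'
    have hsub : t - h ω * u ω = 0 := by simpa [hω'] using hω
    linarith
  rw [discrim] at hdiscrim
  linarith

end CauchySchwarz

section WeightedMeanVar

variable {α : Type*} [MeasurableSpace α] {μ : Measure α} {h u : α → ℝ}

/-- The variance, rescaled by the sample size, of the weighted mean with weights `u` of independent
observations with variances `h`. For `∫ u = 0` it is the junk value `0`. -/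
def weightedMeanVar (μ : Measure α) (h u : α → ℝ) : ℝ :=
  ((∫ ω, u ω ∂μ) ^ 2)⁻¹ * ∫ ω, h ω * u ω ^ 2 ∂μ

theorem weightedMeanVar_inv (μ : Measure α) (h : α → ℝ) :
    weightedMeanVar μ h (fun ω => (h ω)⁻¹) = (∫ ω, (h ω)⁻¹ ∂μ)⁻¹ := by
  have hmul (r : ℝ) : r * r⁻¹ ^ 2 = r⁻¹ := by
    rcases eq_or_ne r 0 with rfl | hr
    · simp
    · field_simp
  simp only [weightedMeanVar, hmul]
  rw [← inv_pow, mul_comm, hmul]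

theorem weightedMeanVar_inv_le (hpos : ∀ᵐ ω ∂μ, 0 < h ω)
    (hinv : Integrable (fun ω => (h ω)⁻¹) μ) (hu : Integrable u μ)
    (hhu : Integrable (fun ω => h ω * u ω ^ 2) μ) (hu0 : ∫ ω, u ω ∂μ ≠ 0) :
    weightedMeanVar μ h (fun ω => (h ω)⁻¹) ≤ weightedMeanVar μ h u := by
  have : (ae μ).NeBot := ⟨fun hbot => by simp [ae_eq_bot.1 hbot] at hu0⟩
  have hinv_pos := integral_pos_of_ae_pos (hpos.mono fun ω => inv_pos.2) hinv
  rw [weightedMeanVar_inv, weightedMeanVar, inv_mul_eq_div, inv_eq_one_div,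
    div_le_div_iff₀ hinv_pos (by positivity), one_mul, mul_comm]
  exact sq_integral_le_integral_inv_mul_integral_mul_sq hpos hinv hu hhu

theorem weightedMeanVar_inv_lt (hpos : ∀ᵐ ω ∂μ, 0 < h ω)
    (hinv : Integrable (fun ω => (h ω)⁻¹) μ) (hu : Integrable u μ)
    (hhu : Integrable (fun ω => h ω * u ω ^ 2) μ) (hu0 : ∫ ω, u ω ∂μ ≠ 0)
    (hconst : ¬ ∃ t : ℝ, ∀ᵐ ω ∂μ, h ω * u ω = t) :
    weightedMeanVar μ h (fun ω => (h ω)⁻¹) < weightedMeanVar μ h u := by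
  have : (ae μ).NeBot := ⟨fun hbot => by simp [ae_eq_bot.1 hbot] at hu0⟩
  have hinv_pos := integral_pos_of_ae_pos (hpos.mono fun ω => inv_pos.2) hinv
  rw [weightedMeanVar_inv, weightedMeanVar, inv_mul_eq_div, inv_eq_one_div,
    div_lt_div_iff₀ hinv_pos (by positivity), one_mul, mul_comm]
  exact sq_integral_lt_integral_inv_mul_integral_mul_sq hpos hinv hu hhu hconst

end WeightedMeanVar

section LpMembership

variable {Ω : Type*} [MeasurableSpace Ω] {μ : Measure Ω} {σ : Ω → ℝ} {c : ℝ}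

theorem memLp_of_integrable_pow {f : Ω → ℝ} {n : ℕ} (hf : AEStronglyMeasurable f μ) (hn : n ≠ 0)
    (heven : Even n) (hfn : Integrable (fun ω => f ω ^ n) μ) : MemLp f n μ := by
  rw [← integrable_norm_rpow_iff hf (by exact_mod_cast hn) (by simp)]
  simpa [heven.pow_abs] using hfn

theorem memLp_inv_sq_of_le [IsFiniteMeasure μ] {r : ℝ} (hσ : AEMeasurable σ μ) (hr : 0 < r)
    (hle : ∀ᵐ ω ∂μ, r ≤ σ ω) (q : ENNReal) : MemLp (fun ω => (σ ω ^ 2)⁻¹) q μ := by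
  refine MemLp.of_bound (by fun_prop) (r ^ 2)⁻¹ (hle.mono fun ω hω => ?_)
  rw [Real.norm_of_nonneg (by positivity)]
  gcongr

theorem memLp_two_mul {f g : Ω → ℝ} (hf : MemLp f 4 μ) (hg : MemLp g 4 μ) :
    MemLp (fun ω => f ω * g ω) 2 μ := by
  have : ENNReal.HolderTriple 4 4 2 := ⟨by
    rw [← two_mul, show (4 : ENNReal) = 2 * 2 by norm_num,
      ENNReal.mul_inv (by simp) (by simp), ← mul_assoc,
      ENNReal.mul_inv_cancel (by simp) (by simp), one_mul]⟩
  exact hg.mul' hf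

theorem memLp_inv_sq_add (hσ : AEMeasurable σ μ) (hne : ∀ᵐ ω ∂μ, σ ω ≠ 0)
    (hinv : MemLp (fun ω => (σ ω ^ 2)⁻¹) 2 μ) (hc : 0 ≤ c) :
    MemLp (fun ω => (σ ω ^ 2 + c)⁻¹) 2 μ := by
  refine hinv.mono (by fun_prop) ?_
  filter_upwards [hne] with ω hω
  rw [Real.norm_of_nonneg (by positivity), Real.norm_of_nonneg (by positivity)]
  gcongr
  linarith

theorem memLp_mul_inv_sq_add [IsFiniteMeasure μ] (hσ : AEMeasurable σ μ)
    (hinv : MemLp (fun ω => (σ ω ^ 2)⁻¹) 2 μ) (hc : 0 ≤ c) :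
    MemLp (fun ω => σ ω * (σ ω ^ 2 + c)⁻¹) 2 μ := by
  have hinv' : MemLp (fun ω => (σ ω)⁻¹) 2 μ :=
    (memLp_two_iff_integrable_sq (by fun_prop)).2 (by simpa using hinv.integrable one_le_two)
  refine hinv'.mono (by fun_prop) (.of_forall fun ω => ?_)
  rcases eq_or_ne (σ ω) 0 with hω | hω
  · simp [hω]
  rw [norm_mul, norm_inv, norm_inv, Real.norm_of_nonneg (r := σ ω ^ 2 + c) (by positivity),
    ← div_eq_mul_inv, div_le_iff₀ (by positivity), inv_mul_eq_div, le_div_iff₀ (by positivity),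
    Real.norm_eq_abs, abs_mul_abs_self, ← sq]
  linarith

end LpMembership

section PositiveFunctional

variable {n : Type*} {Γ : Matrix n n ℝ →ₗ[ℝ] ℝ}

theorem map_nonneg_of_posSemidef (hΓ : ∀ C : Matrix n n ℝ, C.PosDef → 0 < Γ C)
    {B C : Matrix n n ℝ} (hB : B.PosDef) (hC : C.PosSemidef) : 0 ≤ Γ C := by
  have hΓB := hΓ B hB
  by_contra! hneg
  have hsum := hΓ _ (Matrix.PosDef.posSemidef_add hC (hB.smul (div_pos (neg_pos.2 hneg) hΓB)))
  rw [map_add, map_smul, smul_eq_mul, div_mul_cancel₀ _ hΓB.ne', add_neg_cancel] at hsum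
  exact hsum.false

end PositiveFunctional

section SecondMoment

variable {Ω : Type*} [MeasurableSpace Ω] {μ : Measure Ω} {p : ℕ} {x : Ω → Fin p → ℝ}

theorem secondMoment_eq_gram (hx : ∀ j, MemLp (fun ω => x ω j) 2 μ) :
    secondMoment μ x = Matrix.gram ℝ fun j => (hx j).toLp := by
  ext j k
  rw [Matrix.gram_apply, L2.inner_def, secondMoment, Matrix.of_apply]
  refine integral_congr_ae ?_
  filter_upwards [(hx j).coeFn_toLp, (hx k).coeFn_toLp] with ω hj hk
  rw [hj, hk]
  exact mul_comm _ _

theorem posSemidef_secondMoment (hx : ∀ j, MemLp (fun ω => x ω j) 2 μ) :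
    (secondMoment μ x).PosSemidef :=
  secondMoment_eq_gram hx ▸ Matrix.posSemidef_gram ℝ _

theorem posDef_secondMoment_inv (hx : ∀ j, MemLp (fun ω => x ω j) 2 μ)
    (hfull : IsUnit (secondMoment μ x).det) : ((secondMoment μ x)⁻¹).PosDef :=
  ((posSemidef_secondMoment hx).posDef_iff_isUnit.2
    ((Matrix.isUnit_iff_isUnit_det _).2 hfull)).inv

theorem isSymm_secondMoment_inv (μ : Measure Ω) (x : Ω → Fin p → ℝ) :
    (secondMoment μ x)⁻¹.IsSymm :=
  Matrix.IsSymm.inv <| Matrix.ext fun j k => by simp [secondMoment, mul_comm]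

theorem measurable_nonlinPart (μ : Measure Ω) (x : Ω → Fin p → ℝ) {f : (Fin p → ℝ) → ℝ}
    (hf : Measurable f) : Measurable (nonlinPart μ x f) := by
  unfold nonlinPart dotProduct
  fun_prop

theorem misspecMoment_eq_secondMoment (μ : Measure Ω) (x : Ω → Fin p → ℝ) (f : (Fin p → ℝ) → ℝ) :
    misspecMoment μ x f = secondMoment μ fun ω j => nonlinPart μ x f (x ω) * x ω j := by
  ext j k
  simp only [misspecMoment, secondMoment, Matrix.of_apply]
  congr with ω
  ring

theorem posSemidef_matA {f : (Fin p → ℝ) → ℝ}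
    (hgx : ∀ j, MemLp (fun ω => nonlinPart μ x f (x ω) * x ω j) 2 μ) :
    (matA μ x f).PosSemidef := by
  rw [matA, misspecMoment_eq_secondMoment, ← Matrix.conjTranspose_eq_transpose_of_trivial]
  exact (posSemidef_secondMoment hgx).conjTranspose_mul_mul_same _

theorem posDef_matA {f : (Fin p → ℝ) → ℝ} (hfull : IsUnit (secondMoment μ x).det)
    (hM : (misspecMoment μ x f).PosDef) : (matA μ x f).PosDef := by
  rw [matA, ← Matrix.conjTranspose_eq_transpose_of_trivial]
  refine hM.conjTranspose_mul_mul_same (Matrix.mulVec_injective_of_isUnit ?_)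
  exact Matrix.isUnit_nonsing_inv_iff.2 ((Matrix.isUnit_iff_isUnit_det _).2 hfull)

end SecondMoment

section AsympVar

variable {Ω : Type*} [MeasurableSpace Ω] {μ : Measure Ω} {p : ℕ} {x : Ω → Fin p → ℝ}
  {σ : Ω → ℝ} {f : (Fin p → ℝ) → ℝ} {Γ : Matrix (Fin p) (Fin p) ℝ →ₗ[ℝ] ℝ} {w : ℝ → ℝ}

/-- `Γ(A) Γ(B)⁻¹`, the constant noise variance that contributes to `Γ(ν(w))` as much as the
misspecification of the linear model does. -/
def misspecVar (μ : Measure Ω) (x : Ω → Fin p → ℝ) (f : (Fin p → ℝ) → ℝ)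
    (Γ : Matrix (Fin p) (Fin p) ℝ →ₗ[ℝ] ℝ) : ℝ :=
  Γ (matA μ x f) * (Γ (secondMoment μ x)⁻¹)⁻¹

/-- The weight function `w_min(s) = (s² + Γ(A) Γ(B)⁻¹)⁻¹`. -/
def optimalWeight (μ : Measure Ω) (x : Ω → Fin p → ℝ) (f : (Fin p → ℝ) → ℝ)
    (Γ : Matrix (Fin p) (Fin p) ℝ →ₗ[ℝ] ℝ) (s : ℝ) : ℝ :=
  (s ^ 2 + misspecVar μ x f Γ)⁻¹

theorem integrable_sq_add_mul_sq (hw : MemLp (fun ω => w (σ ω)) 2 μ)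
    (hσw : MemLp (fun ω => σ ω * w (σ ω)) 2 μ) (c : ℝ) :
    Integrable (fun ω => (σ ω ^ 2 + c) * w (σ ω) ^ 2) μ := by
  refine (hσw.integrable_sq.add (hw.integrable_sq.const_mul c)).congr (.of_forall fun ω => ?_)
  simp only [Pi.add_apply]
  ring

theorem map_asympVar_eq_mul_weightedMeanVar (hΓB : Γ (secondMoment μ x)⁻¹ ≠ 0)
    (hw : MemLp (fun ω => w (σ ω)) 2 μ) (hσw : MemLp (fun ω => σ ω * w (σ ω)) 2 μ) :
    Γ (asympVar μ x σ f w) = Γ (secondMoment μ x)⁻¹ *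
      weightedMeanVar μ (fun ω => σ ω ^ 2 + misspecVar μ x f Γ) (fun ω => w (σ ω)) := by
  have hA : (secondMoment μ x)⁻¹ * misspecMoment μ x f * (secondMoment μ x)⁻¹ = matA μ x f := by
    rw [matA, (isSymm_secondMoment_inv μ x).eq]
  have hΓA : Γ (matA μ x f) = Γ (secondMoment μ x)⁻¹ * misspecVar μ x f Γ := by
    rw [misspecVar]
    field_simp
  have hsplit : ∫ ω, (σ ω ^ 2 + misspecVar μ x f Γ) * w (σ ω) ^ 2 ∂μ =
      (∫ ω, σ ω ^ 2 * w (σ ω) ^ 2 ∂μ) + misspecVar μ x f Γ * ∫ ω, w (σ ω) ^ 2 ∂μ := by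
    have hσw' : Integrable (fun ω => σ ω ^ 2 * w (σ ω) ^ 2) μ := by
      simpa only [mul_pow] using hσw.integrable_sq
    simp only [add_mul]
    rw [integral_add hσw' (hw.integrable_sq.const_mul _), integral_const_mul]
  rw [asympVar, hA, weightedMeanVar, hsplit]
  simp only [map_smul, map_add, smul_eq_mul, hΓA]
  ring

section Optimality

variable [IsFiniteMeasure μ]

theorem map_asympVar_optimalWeight (hσ : AEMeasurable σ μ) (hσne : ∀ᵐ ω ∂μ, σ ω ≠ 0)
    (hσinv : MemLp (fun ω => (σ ω ^ 2)⁻¹) 2 μ) (hΓB : Γ (secondMoment μ x)⁻¹ ≠ 0)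
    (hc : 0 ≤ misspecVar μ x f Γ) :
    Γ (asympVar μ x σ f (optimalWeight μ x f Γ)) = Γ (secondMoment μ x)⁻¹ *
      weightedMeanVar μ (fun ω => σ ω ^ 2 + misspecVar μ x f Γ)
        (fun ω => (σ ω ^ 2 + misspecVar μ x f Γ)⁻¹) :=
  map_asympVar_eq_mul_weightedMeanVar hΓB (memLp_inv_sq_add hσ hσne hσinv hc)
    (memLp_mul_inv_sq_add hσ hσinv hc)

theorem map_asympVar_optimalWeight_le (hσ : AEMeasurable σ μ) (hσne : ∀ᵐ ω ∂μ, σ ω ≠ 0)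
    (hσinv : MemLp (fun ω => (σ ω ^ 2)⁻¹) 2 μ) (hΓB : 0 < Γ (secondMoment μ x)⁻¹)
    (hc : 0 ≤ misspecVar μ x f Γ) (hw : MemLp (fun ω => w (σ ω)) 2 μ)
    (hσw : MemLp (fun ω => σ ω * w (σ ω)) 2 μ) (hw0 : ∫ ω, w (σ ω) ∂μ ≠ 0) :
    Γ (asympVar μ x σ f (optimalWeight μ x f Γ)) ≤ Γ (asympVar μ x σ f w) := by
  rw [map_asympVar_optimalWeight hσ hσne hσinv hΓB.ne' hc,
    map_asympVar_eq_mul_weightedMeanVar hΓB.ne' hw hσw]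
  refine mul_le_mul_of_nonneg_left (weightedMeanVar_inv_le ?_ ?_ ?_ ?_ hw0) hΓB.le
  · exact hσne.mono fun ω hω => by positivity
  · exact (memLp_inv_sq_add hσ hσne hσinv hc).integrable one_le_two
  · exact hw.integrable one_le_two
  · exact integrable_sq_add_mul_sq hw hσw _

theorem map_asympVar_optimalWeight_lt (hσ : AEMeasurable σ μ) (hσne : ∀ᵐ ω ∂μ, σ ω ≠ 0)
    (hσinv : MemLp (fun ω => (σ ω ^ 2)⁻¹) 2 μ) (hΓB : 0 < Γ (secondMoment μ x)⁻¹)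
    (hc : 0 ≤ misspecVar μ x f Γ) (hw : MemLp (fun ω => w (σ ω)) 2 μ)
    (hσw : MemLp (fun ω => σ ω * w (σ ω)) 2 μ) (hw0 : ∫ ω, w (σ ω) ∂μ ≠ 0)
    (hconst : ¬ ∃ t : ℝ, ∀ᵐ ω ∂μ, (σ ω ^ 2 + misspecVar μ x f Γ) * w (σ ω) = t) :
    Γ (asympVar μ x σ f (optimalWeight μ x f Γ)) < Γ (asympVar μ x σ f w) := by
  rw [map_asympVar_optimalWeight hσ hσne hσinv hΓB.ne' hc,
    map_asympVar_eq_mul_weightedMeanVar hΓB.ne' hw hσw]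
  refine mul_lt_mul_of_pos_left (weightedMeanVar_inv_lt ?_ ?_ ?_ ?_ hw0 hconst) hΓB
  · exact hσne.mono fun ω hω => by positivity
  · exact (memLp_inv_sq_add hσ hσne hσinv hc).integrable one_le_two
  · exact hw.integrable one_le_two
  · exact integrable_sq_add_mul_sq hw hσw _

end Optimality

end AsympVar

section PointMass

variable {Ω : Type*} [MeasurableSpace Ω] {μ : Measure Ω} {σ : Ω → ℝ} {c : ℝ}

theorem exists_ae_eq_const_of_sq_add (hσ : ∀ᵐ ω ∂μ, 0 ≤ σ ω)
    (hconst : ∃ t : ℝ, ∀ᵐ ω ∂μ, σ ω ^ 2 + c = t) : ∃ s : ℝ, ∀ᵐ ω ∂μ, σ ω = s := by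
  obtain ⟨t, ht⟩ := hconst
  refine ⟨√(t - c), ?_⟩
  filter_upwards [hσ, ht] with ω hω hωt
  rw [← hωt, add_sub_cancel_right, Real.sqrt_sq hω]

theorem exists_ae_eq_const_of_sq_add_mul_inv_sq (hσ : ∀ᵐ ω ∂μ, 0 < σ ω) (hc : c ≠ 0)
    (hconst : ∃ t : ℝ, ∀ᵐ ω ∂μ, (σ ω ^ 2 + c) * (σ ω ^ 2)⁻¹ = t) :
    ∃ s : ℝ, ∀ᵐ ω ∂μ, σ ω = s := by
  obtain ⟨t, ht⟩ := hconst
  refine exists_ae_eq_const_of_sq_add (c := 0) (hσ.mono fun ω => le_of_lt) ⟨c / (t - 1), ?_⟩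
  filter_upwards [hσ, ht] with ω hω hωt
  have htc : t - 1 = c / σ ω ^ 2 := by
    rw [← hωt]
    field_simp
    ring
  rw [htc, div_div_cancel₀ hc, add_zero]

end PointMass

theorem wmin_improves_on_ols_and_wls_general
    {Ω : Type*} [MeasurableSpace Ω] (μ : Measure Ω) [IsProbabilityMeasure μ] {p : ℕ}
    (x : Ω → Fin p → ℝ) (σ : Ω → ℝ) (f : (Fin p → ℝ) → ℝ)
    (hfull : IsUnit (secondMoment μ x).det)
    (hx : ∀ j, MemLp (fun ω => x ω j) 2 μ)
    (hgx : ∀ j, MemLp (fun ω => nonlinPart μ x f (x ω) * x ω j) 2 μ)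
    (hσ : MemLp σ 2 μ) (hσpos : ∀ᵐ ω ∂μ, 0 < σ ω) (hσinv : MemLp (fun ω => (σ ω ^ 2)⁻¹) 2 μ)
    (Γ : Matrix (Fin p) (Fin p) ℝ →ₗ[ℝ] ℝ)
    (hΓ : ∀ C : Matrix (Fin p) (Fin p) ℝ, C.PosDef → 0 < Γ C) :
    Γ (asympVar μ x σ f (optimalWeight μ x f Γ))
        ≤ min (Γ (asympVar μ x σ f (fun _ => 1)))
            (Γ (asympVar μ x σ f (fun s => (s ^ 2)⁻¹))) ∧
      ((misspecMoment μ x f).PosDef → (¬ ∃ c : ℝ, ∀ᵐ ω ∂μ, σ ω = c) →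
        Γ (asympVar μ x σ f (optimalWeight μ x f Γ))
          < min (Γ (asympVar μ x σ f (fun _ => 1)))
              (Γ (asympVar μ x σ f (fun s => (s ^ 2)⁻¹)))) := by
  have hσm : AEMeasurable σ μ := hσ.aestronglyMeasurable.aemeasurable
  have hσne : ∀ᵐ ω ∂μ, σ ω ≠ 0 := hσpos.mono fun ω => ne_of_gt
  have hB : ((secondMoment μ x)⁻¹).PosDef := posDef_secondMoment_inv hx hfull
  have hΓB : 0 < Γ (secondMoment μ x)⁻¹ := hΓ _ hB
  have hc : 0 ≤ misspecVar μ x f Γ :=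
    mul_nonneg (map_nonneg_of_posSemidef hΓ hB (posSemidef_matA hgx)) (inv_pos.2 hΓB).le
  have hσ_ols : MemLp (fun ω => σ ω * 1) 2 μ := by simpa only [mul_one] using hσ
  have hint_ols : ∫ _, (1 : ℝ) ∂μ ≠ 0 := by simp
  have hσ_wls : MemLp (fun ω => σ ω * (σ ω ^ 2)⁻¹) 2 μ := by
    simpa only [add_zero] using memLp_mul_inv_sq_add hσm hσinv le_rfl
  have hint_wls : ∫ ω, (σ ω ^ 2)⁻¹ ∂μ ≠ 0 :=
    (integral_pos_of_ae_pos (hσpos.mono fun ω hω => by positivity)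
      (hσinv.integrable one_le_two)).ne'
  refine ⟨le_min ?_ ?_, fun hM hσconst => lt_min ?_ ?_⟩
  · exact map_asympVar_optimalWeight_le hσm hσne hσinv hΓB hc (memLp_const 1) hσ_ols hint_ols
  · exact map_asympVar_optimalWeight_le (w := fun s => (s ^ 2)⁻¹) hσm hσne hσinv hΓB hc hσinv
      hσ_wls hint_wls
  · refine map_asympVar_optimalWeight_lt hσm hσne hσinv hΓB hc (memLp_const 1) hσ_ols hint_ols
      fun hconst => hσconst ?_
    exact exists_ae_eq_const_of_sq_add (hσpos.mono fun ω => le_of_lt)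
      (by simpa only [mul_one] using hconst)
  · have hc' : misspecVar μ x f Γ ≠ 0 :=
      mul_ne_zero (hΓ _ (posDef_matA hfull hM)).ne' (inv_ne_zero hΓB.ne')
    exact map_asympVar_optimalWeight_lt (w := fun s => (s ^ 2)⁻¹) hσm hσne hσinv hΓB hc hσinv
      hσ_wls hint_wls fun hconst =>
        hσconst (exists_ae_eq_const_of_sq_add_mul_inv_sq hσpos hc' hconst)

/-- `Γ(ν(w_min)) ≤ min(Γ(ν(1)), Γ(ν(σ⁻²)))` where
`w_min(σ) = (σ² + Γ(A) Γ(B)⁻¹)⁻¹`, with strict inequality if `E[g(x)² x xᵀ]` is positive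
definite and the distribution of `σ` is not a point mass. -/
theorem wmin_improves_on_ols_and_wls
    {Ω : Type*} [MeasurableSpace Ω] (μ : Measure Ω) [IsProbabilityMeasure μ] {p : ℕ}
    (x : Ω → Fin p → ℝ) (σ ε : Ω → ℝ) (f : (Fin p → ℝ) → ℝ)
    (hxmeas : Measurable x) (hσmeas : Measurable σ) (hεmeas : Measurable ε)
    (hfmeas : Measurable f)
    (hxσindep : IndepFun x σ μ)
    (hεindep : IndepFun ε (fun ω => (x ω, σ ω)) μ)
    (hεint : Integrable ε μ) (hεmean : ∫ ω, ε ω ∂μ = 0)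
    (hεsq : Integrable (fun ω => (ε ω) ^ 2) μ) (hεvar : ∫ ω, (ε ω) ^ 2 ∂μ = 1)
    (hε4 : Integrable (fun ω => (ε ω) ^ 4) μ)
    (hfull : IsUnit (secondMoment μ x).det)
    (hx8 : ∀ j k : Fin p, Integrable (fun ω => (x ω j) ^ 4 * (x ω k) ^ 4) μ)
    (hxf : ∀ j : Fin p, Integrable (fun ω => x ω j * f (x ω)) μ)
    (hg4 : Integrable (fun ω => (nonlinPart μ x f (x ω)) ^ 4) μ)
    (hσ4 : Integrable (fun ω => (σ ω) ^ 4) μ)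
    (σmin : ℝ) (hσmin : 0 < σmin) (hσlb : ∀ᵐ ω ∂μ, σmin ≤ σ ω)
    (Γ : Matrix (Fin p) (Fin p) ℝ →ₗ[ℝ] ℝ)
    (hΓ : ∀ C : Matrix (Fin p) (Fin p) ℝ, C.PosDef → 0 < Γ C)
    (wmin : ℝ → ℝ)
    (hwmin : ∀ s : ℝ,
      wmin s = (s ^ 2 + Γ (matA μ x f) * (Γ ((secondMoment μ x)⁻¹))⁻¹)⁻¹) :
    Γ (asympVar μ x σ f wmin)
        ≤ min (Γ (asympVar μ x σ f (fun _ => 1)))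
            (Γ (asympVar μ x σ f (fun s => (s ^ 2)⁻¹))) ∧
      ((misspecMoment μ x f).PosDef → (¬ ∃ c : ℝ, ∀ᵐ ω ∂μ, σ ω = c) →
        Γ (asympVar μ x σ f wmin)
          < min (Γ (asympVar μ x σ f (fun _ => 1)))
              (Γ (asympVar μ x σ f (fun s => (s ^ 2)⁻¹)))) := by
  have hx (j : Fin p) : Measurable fun ω => x ω j := by fun_prop
  have hg : Measurable fun ω => nonlinPart μ x f (x ω) :=
    (measurable_nonlinPart μ x hfmeas).comp hxmeas
  have hx8' (j : Fin p) : MemLp (fun ω => x ω j) 8 μ :=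
    memLp_of_integrable_pow (hx j).aestronglyMeasurable (by decide) (by decide)
      (by simpa only [← pow_add] using hx8 j j)
  have hg4' := memLp_of_integrable_pow hg.aestronglyMeasurable (by decide) (by decide) hg4
  have hσ4' := memLp_of_integrable_pow hσmeas.aestronglyMeasurable (by decide) (by decide) hσ4
  rw [show wmin = optimalWeight μ x f Γ from funext hwmin]
  exact wmin_improves_on_ols_and_wls_general μ x σ f hfull
    (fun j => (hx8' j).mono_exponent (by norm_num))
    (fun j => memLp_two_mul hg4' ((hx8' j).mono_exponent (by norm_num)))
    (hσ4'.mono_exponent (by norm_num)) (hσlb.mono fun ω => hσmin.trans_le)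
    (memLp_inv_sq_of_le hσmeas.aemeasurable hσmin hσlb 2) Γ hΓ
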